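/- For partitions λ and μ, one has λ ∈ Π(μ) if and only if λ ⊆ μ and the skew diagram μ/λ lies in Γ; that is, x_λ is obtained from x_μ by flipping a set of pairwise disjoint-or-nested arrow pairs if and only if μ/λ admits a covering by hooks all belonging to Γ₀. -/

import Mathlib

open Finset

/-- The content of a box in position `(i, j)` is `j - i`. -/
def content (b : ℕ × ℕ) : ℤ := (b.2 : ℤ) - (b.1 : ℤ)

/-- The anticontent of a box in position `(i, j)` is `i + j`. -/
def anticontent (b : ℕ × ℕ) : ℤ := (b.1 : ℤ) + (b.2 : ℤ)

/-- Two boxes are adjacent if they share a side. -/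
def BoxAdj (a b : ℕ × ℕ) : Prop :=
  (a.1 = b.1 ∧ (a.2 + 1 = b.2 ∨ b.2 + 1 = a.2)) ∨
  (a.2 = b.2 ∧ (a.1 + 1 = b.1 ∨ b.1 + 1 = a.1))

/-- A finite set of boxes is connected if any two boxes are linked by a chain of
adjacent boxes inside the set. -/
def IsConnectedBoxes (S : Finset (ℕ × ℕ)) : Prop :=
  ∀ a ∈ S, ∀ b ∈ S,
    Relation.ReflTransGen (fun x y => x ∈ S ∧ y ∈ S ∧ BoxAdj x y) a b

/-- A skew Young diagram: the difference of two Young diagrams `l ⊆ m`. -/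
def IsSkew (S : Finset (ℕ × ℕ)) : Prop :=
  ∃ l m : YoungDiagram, l ≤ m ∧ S = m.cells \ l.cells

/-- A hook: a nonempty connected skew Young diagram with no two boxes of the same content. -/
def IsHook (S : Finset (ℕ × ℕ)) : Prop :=
  IsSkew S ∧ S.Nonempty ∧ IsConnectedBoxes S ∧
    ∀ a ∈ S, ∀ b ∈ S, content a = content b → a = b

/-- Height: number of rows occupied. -/
def ht (S : Finset (ℕ × ℕ)) : ℕ := (S.image Prod.fst).card

/-- Width: number of columns occupied. -/
def wd (S : Finset (ℕ × ℕ)) : ℕ := (S.image Prod.snd).card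

/-- Two hooks are disjoint if no box of one equals or shares a side with a box of the other. -/
def HooksDisjoint (γ δ : Finset (ℕ × ℕ)) : Prop :=
  ∀ a ∈ γ, ∀ b ∈ δ, a ≠ b ∧ ¬ BoxAdj a b

/-- `γ` is nested in `δ`: each lower and right side of a box of `γ` is shared
with another box of `γ` or a box of `δ`. -/
def NestedIn (γ δ : Finset (ℕ × ℕ)) : Prop :=
  ∀ b ∈ γ, ((b.1 + 1, b.2) ∈ γ ∨ (b.1 + 1, b.2) ∈ δ) ∧
           ((b.1, b.2 + 1) ∈ γ ∨ (b.1, b.2 + 1) ∈ δ)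

/-- A covering of `κ`: a decomposition of its boxes into connected hooks, any
two of which are disjoint or nested. -/
def IsCovering (κ : Finset (ℕ × ℕ)) (C : Finset (Finset (ℕ × ℕ))) : Prop :=
  (∀ γ ∈ C, IsHook γ) ∧
  (∀ γ ∈ C, γ ⊆ κ) ∧
  (∀ b ∈ κ, ∃! γ, γ ∈ C ∧ b ∈ γ) ∧
  (∀ γ ∈ C, ∀ δ ∈ C, γ ≠ δ → HooksDisjoint γ δ ∨ NestedIn γ δ ∨ NestedIn δ γ)

/-- The D-condition: the anticontent of the box of minimal content is minimal
among the anticontents of all boxes (no box strictly above the diagonal through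
the minimal box). -/
def DCond (S : Finset (ℕ × ℕ)) : Prop :=
  ∀ m ∈ S, (∀ c ∈ S, content m ≤ content c) →
    ∀ b ∈ S, anticontent m ≤ anticontent b

/-- `Γ₀`: connected hooks satisfying the HW-condition and the D-condition. -/
def InGammaZero (γ : Finset (ℕ × ℕ)) : Prop :=
  IsHook γ ∧ wd γ = ht γ + 1 ∧ DCond γ

/-- The sequence `x_λ = (λ₁, λ₂ − 1, λ₃ − 2, …)` (indexed from `0`). -/
def xseq (μ : YoungDiagram) (k : ℕ) : ℤ := (μ.rowLen k : ℤ) - (k : ℤ)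

/-- `lam` is obtained from `μ` by flipping the wb pair `(lw, lb)`:
`lw < lb`, `lw` is white and `lb` is black in `x_μ`, and the black set of
`x_lam` is that of `x_μ` with `lb` replaced by `lw`. -/
def IsFlip (μ lam : YoungDiagram) (lw lb : ℤ) : Prop :=
  lw < lb ∧ lw ∉ Set.range (xseq μ) ∧ lb ∈ Set.range (xseq μ) ∧
    Set.range (xseq lam) = insert lw (Set.range (xseq μ) \ {lb})

/-- The number of black dots of `x_μ` in the interval `[a, b]`. -/
noncomputable def blackCount (μ : YoungDiagram) (a b : ℤ) : ℕ :=
  Nat.card {n : ℤ // n ∈ Set.Icc a b ∧ n ∈ Set.range (xseq μ)}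

/-- The number of white dots of `x_μ` in the interval `[a, b]`. -/
noncomputable def whiteCount (μ : YoungDiagram) (a b : ℤ) : ℕ :=
  Nat.card {n : ℤ // n ∈ Set.Icc a b ∧ n ∉ Set.range (xseq μ)}

/-- An arrow pair of `x_μ`: a wb pair `(lw, lb)` such that (hw-condition) the
interval `[lw, lb]` contains exactly one more white than black dot, and
(d-condition) no interval `(lw, m]` with `m < lb` contains fewer white than
black dots. -/
def ArrowPair (μ : YoungDiagram) (lw lb : ℤ) : Prop :=
  lw < lb ∧ lw ∉ Set.range (xseq μ) ∧ lb ∈ Set.range (xseq μ) ∧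
    whiteCount μ lw lb = blackCount μ lw lb + 1 ∧
    ∀ m : ℤ, lw < m → m < lb → blackCount μ (lw + 1) m ≤ whiteCount μ (lw + 1) m

/-- `Γ`: skew Young diagrams whose (unique) covering by pairwise
disjoint-or-nested hooks consists of hooks of `Γ₀`. -/
def InGamma (κ : Finset (ℕ × ℕ)) : Prop :=
  IsSkew κ ∧ ∃ C : Finset (Finset (ℕ × ℕ)), IsCovering κ C ∧ ∀ γ ∈ C, InGammaZero γ

/-- `λ ∈ Π(μ)`: `x_λ` is obtained from `x_μ` by flipping a finite collection of
arrow pairs of `x_μ`, any two of which are disjoint or nested. -/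
def InPi (μ lam : YoungDiagram) : Prop :=
  ∃ P : Finset (ℤ × ℤ),
    (∀ p ∈ P, ArrowPair μ p.1 p.2) ∧
    (∀ p ∈ P, ∀ q ∈ P, p ≠ q →
      (p.2 < q.1 ∨ q.2 < p.1 ∨ (q.1 < p.1 ∧ p.2 < q.2) ∨ (p.1 < q.1 ∧ q.2 < p.2))) ∧
    (∀ n : ℤ, n ∈ Set.range (xseq lam) ↔
      ((n ∈ Set.range (xseq μ) ∧ ∀ p ∈ P, p.2 ≠ n) ∨ ∃ p ∈ P, p.1 = n))

/-!
Let `rimRow μ c` be the number of black dots of `x_μ` to the right of `c`; this is also the row in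
which the diagonal of content `c` leaves `μ`. Flipping a non-crossing family of wb pairs lowers
`rimRow μ c` by the number of pairs around `c`, so it removes from `μ` one hook for each pair
`(a, b)`: the piece of the rim on the contents `[a, b)`, moved up the diagonals by the number of
pairs around `(a, b)`. Conversely, nested hooks of a covering of a skew diagram are carried into one
another by the diagonal translation by one step. Hence each hook of a covering of `μ/λ` stays at a
constant distance from the rim of `μ`, and its ends form a wb pair of `x_μ`. For such a hook the two
conditions defining `Γ₀` are the two conditions on an arrow pair, both read off from `rimRow μ`.
-/

section UnitDescent

/-- The profile of a lattice path: passing from `c` to `c - 1` raises the value by `0` or `1`.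
Such functions record the row of a ribbon as a function of the content. -/
def UnitDescent (f : ℤ → ℤ) : Prop := ∀ c, f (c - 1) = f c ∨ f (c - 1) = f c + 1

lemma exists_eq_of_le_sub_one_add_one {g : ℤ → ℤ} (hg : ∀ c, g c ≤ g (c - 1) + 1) {a b v : ℤ}
    (hab : a ≤ b) (ha : g a ≤ v) (hb : v ≤ g b) : ∃ c, a ≤ c ∧ c ≤ b ∧ g c = v := by
  induction b, hab using Int.leInduction with
  | base => exact ⟨a, le_rfl, le_rfl, le_antisymm ha hb⟩
  | succ n hn ih =>
    rcases le_or_gt v (g n) with hv | hv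
    · obtain ⟨c, hac, hcn, hc⟩ := ih hv
      exact ⟨c, hac, by omega, hc⟩
    · have hstep := hg (n + 1)
      rw [add_sub_cancel_right] at hstep
      exact ⟨n + 1, by omega, le_rfl, by omega⟩

namespace UnitDescent

variable {f : ℤ → ℤ}

lemma eq_or_eq_succ (hf : UnitDescent f) (c : ℤ) : f c = f (c + 1) ∨ f c = f (c + 1) + 1 := by
  simpa only [add_sub_cancel_right] using hf (c + 1)

lemma antitone (hf : UnitDescent f) : Antitone f :=
  antitone_int_of_succ_le fun c => by have := hf.eq_or_eq_succ c; omega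

lemma monotone_id_add (hf : UnitDescent f) : Monotone fun c => c + f c :=
  monotone_int_of_le_succ fun c => by have := hf.eq_or_eq_succ c; omega

lemma image_Icc (hf : UnitDescent f) {a b : ℤ} (hab : a ≤ b) :
    (Icc a b).image f = Icc (f b) (f a) := by
  ext v
  simp only [mem_image, mem_Icc]
  constructor
  · rintro ⟨c, ⟨hac, hcb⟩, rfl⟩
    exact ⟨hf.antitone hcb, hf.antitone hac⟩
  · rintro ⟨hbv, hva⟩
    obtain ⟨c, hac, hcb, hc⟩ := exists_eq_of_le_sub_one_add_one (g := fun c => -f c) (v := -v)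
      (fun c => by have := hf c; omega) hab (by omega) (by omega)
    exact ⟨c, ⟨hac, hcb⟩, neg_injective hc⟩

lemma image_id_add_Icc (hf : UnitDescent f) {a b : ℤ} (hab : a ≤ b) :
    (Icc a b).image (fun c => c + f c) = Icc (a + f a) (b + f b) := by
  ext v
  simp only [mem_image, mem_Icc]
  constructor
  · rintro ⟨c, ⟨hac, hcb⟩, rfl⟩
    exact ⟨hf.monotone_id_add hac, hf.monotone_id_add hcb⟩
  · rintro ⟨hav, hvb⟩
    obtain ⟨c, hac, hcb, hc⟩ := exists_eq_of_le_sub_one_add_one (g := fun c => c + f c)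
      (fun c => by have := hf c; omega) hab hav hvb
    exact ⟨c, ⟨hac, hcb⟩, hc⟩

end UnitDescent

end UnitDescent

/-! ### Boxes in content and row coordinates -/

section Boxes

variable {x y : ℕ × ℕ}

lemma box_ext (hc : content x = content y) (hr : x.1 = y.1) : x = y := by
  unfold content at hc
  exact Prod.ext hr (by omega)

lemma exists_box {c r : ℤ} (hr : 0 ≤ r) (hc : 0 ≤ c + r) :
    ∃ x : ℕ × ℕ, content x = c ∧ (x.1 : ℤ) = r :=
  ⟨(r.toNat, (c + r).toNat), by simp only [content]; omega, by simp only; omega⟩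

lemma content_add_diag (x : ℕ × ℕ) (k : ℕ) : content (x + (k, k)) = content x := by
  simp only [content, Prod.fst_add, Prod.snd_add]
  omega

lemma add_diag_succ (x : ℕ × ℕ) (k : ℕ) : x + (1, 1) + (k, k) = x + (k + 1, k + 1) := by
  rw [add_assoc, add_comm k 1]
  rfl

lemma content_down (x : ℕ × ℕ) : content (x.1 + 1, x.2) = content x - 1 := by
  simp only [content]
  omega

lemma content_right (x : ℕ × ℕ) : content (x.1, x.2 + 1) = content x + 1 := by
  simp only [content]
  omega

lemma box_le_iff : x ≤ y ↔ x.1 ≤ y.1 ∧ content x + x.1 ≤ content y + y.1 := by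
  rw [Prod.le_def]
  simp only [content]
  omega

lemma anticontent_eq (x : ℕ × ℕ) : anticontent x = content x + 2 * x.1 := by
  simp only [content, anticontent]
  omega

lemma boxAdj_iff : BoxAdj x y ↔
    (content y = content x + 1 ∧ (y.1 = x.1 ∨ x.1 = y.1 + 1)) ∨
      (content x = content y + 1 ∧ (x.1 = y.1 ∨ y.1 = x.1 + 1)) := by
  simp only [BoxAdj, content]
  omega

lemma BoxAdj.symm (h : BoxAdj x y) : BoxAdj y x := by
  rw [boxAdj_iff] at h ⊢
  omega

lemma boxAdj_down (x : ℕ × ℕ) : BoxAdj x (x.1 + 1, x.2) := Or.inr ⟨rfl, Or.inl rfl⟩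

lemma boxAdj_right (x : ℕ × ℕ) : BoxAdj x (x.1, x.2 + 1) := Or.inl ⟨rfl, Or.inl rfl⟩

lemma HooksDisjoint.symm {γ δ : Finset (ℕ × ℕ)} (h : HooksDisjoint γ δ) : HooksDisjoint δ γ :=
  fun a ha b hb => ⟨(h b hb a ha).1.symm, fun hadj => (h b hb a ha).2 hadj.symm⟩

lemma isSkew_iff_ordConnected {S : Finset (ℕ × ℕ)} :
    IsSkew S ↔ (S : Set (ℕ × ℕ)).OrdConnected := by
  constructor
  · rintro ⟨l, m, -, rfl⟩
    refine ⟨fun x hx y hy z hz => ?_⟩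
    rw [mem_coe, mem_sdiff] at hx hy ⊢
    exact ⟨m.isLowerSet hz.2 hy.1, fun hzl => hx.2 (l.isLowerSet hz.1 hzl)⟩
  · intro hS
    have mem_lower (z : ℕ × ℕ) : z ∈ S.biUnion Iic ↔ ∃ s ∈ S, z ≤ s := by
      simp only [mem_biUnion, mem_Iic]
    let m : YoungDiagram := ⟨S.biUnion Iic, fun x y hyx hx => by
      rw [mem_coe, mem_lower] at hx ⊢
      exact hx.imp fun s hs => ⟨hs.1, hyx.trans hs.2⟩⟩
    let l : YoungDiagram := ⟨S.biUnion Iic \ S, fun x y hyx hx => by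
      rw [mem_coe, mem_sdiff, mem_lower] at hx ⊢
      obtain ⟨⟨s, hs, hxs⟩, hxS⟩ := hx
      exact ⟨⟨s, hs, hyx.trans hxs⟩, fun hy => hxS (hS.out hy hs ⟨hyx, hxs⟩)⟩⟩
    have hSm : S ⊆ m.cells := fun x hx => (mem_lower x).2 ⟨x, hx, le_rfl⟩
    exact ⟨l, m, sdiff_subset, (Finset.sdiff_sdiff_eq_self hSm).symm⟩

lemma IsSkew.mem_of_le_of_le {S : Finset (ℕ × ℕ)} (hS : IsSkew S) {x y z : ℕ × ℕ} (hx : x ∈ S)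
    (hy : y ∈ S) (hxz : x ≤ z) (hzy : z ≤ y) : z ∈ S :=
  (isSkew_iff_ordConnected.1 hS).out hx hy ⟨hxz, hzy⟩

end Boxes

section Hooks

variable {S γ δ : Finset (ℕ × ℕ)} {x y : ℕ × ℕ}

lemma IsHook.eq_of_content_eq (hS : IsHook S) (hx : x ∈ S) (hy : y ∈ S)
    (h : content x = content y) : x = y :=
  hS.2.2.2 x hx y hy h

lemma IsHook.add_diag_notMem (hS : IsHook S) (hx : x ∈ S) {k : ℕ} (hk : 0 < k) :
    x + (k, k) ∉ S := fun hxk => by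
  have := congrArg Prod.fst (hS.eq_of_content_eq hxk hx (content_add_diag x k))
  rw [Prod.fst_add] at this
  omega

-- A chain of adjacent boxes from `x` to larger contents last leaves the content of `x` at `x`.
lemma IsHook.exists_boxAdj_content_succ (hS : IsHook S) (hx : x ∈ S) (hy : y ∈ S)
    (hxy : content x < content y) : ∃ z ∈ S, content z = content x + 1 ∧ BoxAdj x z := by
  have path := hS.2.2.1 x hx y hy
  clear hy
  induction path with
  | refl => omega
  | @tail u v _ huv ih =>
    obtain ⟨hu, hv, hadj⟩ := huv
    rcases lt_or_ge (content x) (content u) with hxu | hux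
    · exact ih hxu
    · have hstep := boxAdj_iff.1 hadj
      obtain rfl : u = x := hS.eq_of_content_eq hu hx (by omega)
      exact ⟨v, hv, by omega, hadj⟩

lemma IsHook.exists_content_eq (hS : IsHook S) (hx : x ∈ S) (hy : y ∈ S) {c : ℤ}
    (hxc : content x ≤ c) (hcy : c ≤ content y) : ∃ z ∈ S, content z = c := by
  induction c, hxc using Int.leInduction with
  | base => exact ⟨x, hx, rfl⟩
  | succ n hn ih =>
    obtain ⟨u, hu, rfl⟩ := ih (by omega)
    obtain ⟨z, hz, hzu, -⟩ := hS.exists_boxAdj_content_succ hu hy (by omega)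
    exact ⟨z, hz, hzu⟩

lemma NestedIn.add_diag_mem (hγ : IsHook γ) (hδ : IsHook δ) (hdisj : Disjoint γ δ)
    (hn : NestedIn γ δ) (hx : x ∈ γ) : x + (1, 1) ∈ δ := by
  have hxγ : x + (1, 1) ∉ γ := hγ.add_diag_notMem hx one_pos
  obtain ⟨hdown, hright⟩ := hn x hx
  rcases hdown with hdown | hdown
  · exact (hn _ hdown).2.resolve_left hxγ
  rcases hright with hright | hright
  · exact (hn _ hright).1.resolve_left hxγ
  -- `δ` contains the neighbours below and to the right of `x`; the box of `δ` joining them is not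
  -- `x`, so it is the opposite corner of the square.
  obtain ⟨z, hz, hzc, hadj⟩ := hδ.exists_boxAdj_content_succ hdown hright
    (by rw [content_down, content_right]; omega)
  have hzx : z ≠ x := fun h => disjoint_left.1 hdisj hx (h ▸ hz)
  rw [content_down, sub_add_cancel] at hzc
  have hrow : z.1 ≠ x.1 := fun h => hzx (box_ext hzc h)
  rw [boxAdj_iff, content_down] at hadj
  have : z = x + (1, 1) := box_ext (by rw [hzc, content_add_diag]) (by
    rw [Prod.fst_add]
    omega)
  rwa [← this]

end Hooks

/-! ### Ribbons -/

/-- `S` is the ribbon with profile `f` on the contents `[a, b)`: its boxes are those in row `f c` on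
the diagonal of content `c`, one for each `c` in `[a, b)`. -/
structure IsRibbon (S : Finset (ℕ × ℕ)) (f : ℤ → ℤ) (a b : ℤ) : Prop where
  lt : a < b
  mem_iff_row : ∀ x, x ∈ S ↔ a ≤ content x ∧ content x < b ∧ (x.1 : ℤ) = f (content x)
  exists_content_eq : ∀ c, a ≤ c → c < b → ∃ x ∈ S, content x = c

/-- The set of boxes in row `f c` and of content `c`, for `c` in `[a, b)`. Boxes are truncated to
natural number coordinates, so `f c` and `c + f c` are meant to be nonnegative there. -/
noncomputable def ribbon (f : ℤ → ℤ) (a b : ℤ) : Finset (ℕ × ℕ) :=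
  (Ico a b).image fun c => ((f c).toNat, (c + f c).toNat)

lemma isRibbon_ribbon {f : ℤ → ℤ} {a b : ℤ} (hab : a < b)
    (hf : ∀ c, a ≤ c → c < b → 0 ≤ f c ∧ 0 ≤ c + f c) : IsRibbon (ribbon f a b) f a b := by
  have content_box (c : ℤ) (hac : a ≤ c) (hcb : c < b) :
      content ((f c).toNat, (c + f c).toNat) = c := by
    have := hf c hac hcb
    simp only [content]
    omega
  refine ⟨hab, fun x => ?_, fun c hac hcb =>
    ⟨_, mem_image_of_mem _ (mem_Ico.2 ⟨hac, hcb⟩), content_box c hac hcb⟩⟩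
  simp only [ribbon, mem_image, mem_Ico]
  constructor
  · rintro ⟨c, ⟨hac, hcb⟩, rfl⟩
    rw [content_box c hac hcb]
    exact ⟨hac, hcb, Int.toNat_of_nonneg (hf c hac hcb).1⟩
  · rintro ⟨hac, hcb, hrow⟩
    refine ⟨content x, ⟨hac, hcb⟩, box_ext (content_box _ hac hcb) ?_⟩
    simp only
    omega

namespace IsRibbon

variable {S : Finset (ℕ × ℕ)} {f : ℤ → ℤ} {a b : ℤ}

lemma eq_of_content_eq (hS : IsRibbon S f a b) {x y : ℕ × ℕ} (hx : x ∈ S) (hy : y ∈ S)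
    (h : content x = content y) : x = y := by
  rw [hS.mem_iff_row] at hx hy
  rw [h] at hx
  exact box_ext h (by omega)

lemma isSkew (hS : IsRibbon S f a b) (hf : UnitDescent f) : IsSkew S := by
  refine isSkew_iff_ordConnected.2 ⟨fun x hx y hy z ⟨hxz, hzy⟩ => ?_⟩
  rw [mem_coe, hS.mem_iff_row] at hx hy ⊢
  rw [box_le_iff] at hxz hzy
  have graph {s t : ℤ} (hst : s ≤ t) : f t ≤ f s ∧ s + f s ≤ t + f t :=
    ⟨hf.antitone hst, hf.monotone_id_add hst⟩
  have row_ge : f (content z) ≤ z.1 := by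
    rcases le_total (content x) (content z) with h | h <;> have := graph h <;> omega
  have row_le : z.1 ≤ f (content z) := by
    rcases le_total (content z) (content y) with h | h <;> have := graph h <;> omega
  rcases le_total (content x) (content y) with h | h <;> have := graph h <;> omega

lemma boxAdj_of_content_eq_add_one (hS : IsRibbon S f a b) (hf : UnitDescent f) {x y : ℕ × ℕ}
    (hx : x ∈ S) (hy : y ∈ S) (h : content y = content x + 1) : BoxAdj x y := by
  rw [hS.mem_iff_row] at hx hy
  have hstep := hf.eq_or_eq_succ (content x)
  rw [← h] at hstep
  rw [boxAdj_iff]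
  omega

lemma isConnectedBoxes (hS : IsRibbon S f a b) (hf : UnitDescent f) : IsConnectedBoxes S := by
  have climb (n : ℕ) : ∀ x ∈ S, ∀ y ∈ S, content y = content x + n →
      Relation.ReflTransGen (fun x y => x ∈ S ∧ y ∈ S ∧ BoxAdj x y) x y := by
    induction n with
    | zero =>
      intro x hx y hy h
      rw [hS.eq_of_content_eq hx hy (by omega)]
    | succ n ih =>
      intro x hx y hy h
      have hxc := (hS.mem_iff_row x).1 hx
      have hyc := (hS.mem_iff_row y).1 hy
      obtain ⟨z, hz, hzy⟩ := hS.exists_content_eq (content y - 1) (by omega) (by omega)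
      exact (ih x hx z hz (by omega)).tail
        ⟨hz, hy, hS.boxAdj_of_content_eq_add_one hf hz hy (by omega)⟩
  intro x hx y hy
  rcases le_total (content x) (content y) with h | h
  · exact climb (content y - content x).toNat x hx y hy (by omega)
  · exact Relation.ReflTransGen.mono (fun _ _ ⟨hu, hv, huv⟩ => ⟨hv, hu, huv.symm⟩) _ _ <|
      Relation.reflTransGen_swap.2 <| climb (content x - content y).toNat y hy x hx (by omega)

lemma isHook (hS : IsRibbon S f a b) (hf : UnitDescent f) : IsHook S :=
  have ⟨x, hx, _⟩ := hS.exists_content_eq a le_rfl hS.lt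
  ⟨hS.isSkew hf, ⟨x, hx⟩, hS.isConnectedBoxes hf, fun _ hx _ hy h => hS.eq_of_content_eq hx hy h⟩

lemma image_eq (hS : IsRibbon S f a b) {g : ℕ × ℕ → ℤ} {h : ℤ → ℤ}
    (hg : ∀ x ∈ S, g x = h (content x)) : S.image g = (Icc a (b - 1)).image h := by
  ext v
  simp only [mem_image, mem_Icc]
  constructor
  · rintro ⟨x, hx, rfl⟩
    have hxc := (hS.mem_iff_row x).1 hx
    exact ⟨content x, by omega, (hg x hx).symm⟩
  · rintro ⟨c, ⟨hac, hcb⟩, rfl⟩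
    obtain ⟨x, hx, rfl⟩ := hS.exists_content_eq c hac (by omega)
    exact ⟨x, hx, hg x hx⟩

lemma ht_eq (hS : IsRibbon S f a b) (hf : UnitDescent f) :
    (ht S : ℤ) = f a - f (b - 1) + 1 := by
  have hab : a ≤ b - 1 := by have := hS.lt; omega
  have hrows : (S.image Prod.fst).image ((↑) : ℕ → ℤ) = Icc (f (b - 1)) (f a) := by
    rw [image_image, hS.image_eq (g := Nat.cast ∘ Prod.fst) (h := f)
      fun x hx => ((hS.mem_iff_row x).1 hx).2.2, hf.image_Icc hab]
  have := hf.antitone hab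
  rw [ht, ← card_image_of_injective _ (Nat.cast_injective (R := ℤ)), hrows, Int.card_Icc]
  omega

lemma wd_eq (hS : IsRibbon S f a b) (hf : UnitDescent f) :
    (wd S : ℤ) = (b - 1 + f (b - 1)) - (a + f a) + 1 := by
  have hab : a ≤ b - 1 := by have := hS.lt; omega
  have hcols : (S.image Prod.snd).image ((↑) : ℕ → ℤ) = Icc (a + f a) (b - 1 + f (b - 1)) := by
    rw [image_image, hS.image_eq (h := fun c => c + f c), hf.image_id_add_Icc hab]
    intro x hx
    rw [← ((hS.mem_iff_row x).1 hx).2.2, content, Function.comp_apply, sub_add_cancel]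
  have := hf.monotone_id_add hab
  simp only at this
  rw [wd, ← card_image_of_injective _ (Nat.cast_injective (R := ℤ)), hcols, Int.card_Icc]
  omega

end IsRibbon

/-- The conditions (hw) and (d) for the profile `f` on `[a, b)`. For the ribbon with profile `f`
they are the two conditions defining `Γ₀`; when `f c` counts the black dots to the right of `c`,
they are the two conditions on an arrow pair `(a, b)`. -/
def ArrowProfile (f : ℤ → ℤ) (a b : ℤ) : Prop :=
  b - a = 2 * (f a - f (b - 1)) + 2 ∧ ∀ c, a ≤ c → c < b → 2 * (f a - f c) ≤ c - a

lemma arrowProfile_congr {f g : ℤ → ℤ} (h : ∀ c c', f c - f c' = g c - g c') (a b : ℤ) :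
    ArrowProfile f a b ↔ ArrowProfile g a b := by
  simp only [ArrowProfile, h]

lemma IsRibbon.dCond_iff {S : Finset (ℕ × ℕ)} {f : ℤ → ℤ} {a b : ℤ} (hS : IsRibbon S f a b) :
    DCond S ↔ ∀ c, a ≤ c → c < b → 2 * (f a - f c) ≤ c - a := by
  obtain ⟨m, hm, hma⟩ := hS.exists_content_eq a le_rfl hS.lt
  have hmrow := ((hS.mem_iff_row m).1 hm).2.2
  have hmin : ∀ x ∈ S, content m ≤ content x := fun x hx => by
    rw [hma]
    exact ((hS.mem_iff_row x).1 hx).1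
  rw [hma] at hmrow
  constructor
  · intro hD c hac hcb
    obtain ⟨x, hx, rfl⟩ := hS.exists_content_eq c hac hcb
    have hxrow := ((hS.mem_iff_row x).1 hx).2.2
    have := hD m hm hmin x hx
    rw [anticontent_eq, anticontent_eq] at this
    omega
  · intro h m' hm' hmin' x hx
    obtain rfl : m' = m := hS.eq_of_content_eq hm' hm (le_antisymm (hmin' m hm) (hmin m' hm'))
    rw [hS.mem_iff_row] at hx
    have := h (content x) hx.1 hx.2.1
    rw [anticontent_eq, anticontent_eq]
    omega

lemma IsRibbon.inGammaZero_iff {S : Finset (ℕ × ℕ)} {f : ℤ → ℤ} {a b : ℤ}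
    (hS : IsRibbon S f a b) (hf : UnitDescent f) : InGammaZero S ↔ ArrowProfile f a b := by
  have hht := hS.ht_eq hf
  have hwd := hS.wd_eq hf
  rw [InGammaZero, ArrowProfile, and_iff_right (hS.isHook hf), hS.dCond_iff]
  exact and_congr_left' (by omega)

/-! ### The rim of a Young diagram and its Maya diagram -/

section Rim

variable {μ lam : YoungDiagram}

lemma xseq_strictAnti (μ : YoungDiagram) : StrictAnti (xseq μ) := fun i j hij => by
  have := μ.rowLen_anti i j hij.le
  unfold xseq
  omega

lemma exists_xseq_le (μ : YoungDiagram) (c : ℤ) : ∃ k, xseq μ k ≤ c := by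
  refine ⟨((μ.rowLen 0 : ℤ) - c).toNat, ?_⟩
  have := μ.rowLen_anti 0 ((μ.rowLen 0 : ℤ) - c).toNat (Nat.zero_le _)
  unfold xseq
  omega

/-- The number of black dots of `x_μ` strictly to the right of `c`. It is also the first row in
which the diagonal of content `c` lies outside `μ`. -/
def rimRow (μ : YoungDiagram) (c : ℤ) : ℤ := (Nat.find (exists_xseq_le μ c) : ℕ)

lemma rimRow_nonneg (μ : YoungDiagram) (c : ℤ) : 0 ≤ rimRow μ c := Int.natCast_nonneg _

lemma lt_rimRow_iff {c : ℤ} {i : ℕ} : (i : ℤ) < rimRow μ c ↔ c < xseq μ i := by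
  rw [rimRow, Nat.cast_lt, Nat.lt_find_iff]
  exact ⟨fun h => not_le.1 (h i le_rfl),
    fun h m hm => not_le.2 (h.trans_le ((xseq_strictAnti μ).antitone hm))⟩

lemma rimRow_eq_of_forall {c r : ℤ} (hr : 0 ≤ r) (h : ∀ i : ℕ, c < xseq μ i ↔ (i : ℤ) < r) :
    rimRow μ c = r := by
  have hrim := rimRow_nonneg μ c
  have h₁ := h (rimRow μ c).toNat
  have h₂ := h r.toNat
  rw [← lt_rimRow_iff] at h₁ h₂
  omega

lemma id_add_rimRow_nonneg (μ : YoungDiagram) (c : ℤ) : 0 ≤ c + rimRow μ c := by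
  have hrim := rimRow_nonneg μ c
  have hout := lt_rimRow_iff (μ := μ) (c := c) (i := (rimRow μ c).toNat)
  unfold xseq at hout
  omega

lemma rimRow_eq_zero {c : ℤ} (hc : (μ.rowLen 0 : ℤ) ≤ c) : rimRow μ c = 0 :=
  rimRow_eq_of_forall le_rfl fun i => by
    have := μ.rowLen_anti 0 i (Nat.zero_le i)
    unfold xseq
    omega

open Classical in
lemma rimRow_sub_one (μ : YoungDiagram) (c : ℤ) :
    rimRow μ (c - 1) = rimRow μ c + if c ∈ Set.range (xseq μ) then 1 else 0 := by
  split_ifs with hc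
  · obtain ⟨k, rfl⟩ := hc
    have hlt (i : ℕ) : xseq μ k < xseq μ i ↔ i < k := (xseq_strictAnti μ).lt_iff_gt
    have hle (i : ℕ) : xseq μ k ≤ xseq μ i ↔ i ≤ k := (xseq_strictAnti μ).le_iff_ge
    rw [rimRow_eq_of_forall (c := xseq μ k) (r := k) (by omega) (by simpa using hlt),
      rimRow_eq_of_forall (r := (k : ℤ) + 1) (by omega) fun i => by
        have := hle i
        omega]
  · rw [add_zero]
    refine rimRow_eq_of_forall (rimRow_nonneg μ c) fun i => ?_
    have : xseq μ i ≠ c := fun h => hc ⟨i, h⟩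
    rw [lt_rimRow_iff]
    omega

lemma mem_range_xseq_iff {c : ℤ} : c ∈ Set.range (xseq μ) ↔ rimRow μ (c - 1) = rimRow μ c + 1 := by
  rw [rimRow_sub_one]
  split_ifs with hc <;> simp [hc]

lemma notMem_range_xseq_iff {c : ℤ} : c ∉ Set.range (xseq μ) ↔ rimRow μ (c - 1) = rimRow μ c := by
  rw [rimRow_sub_one]
  split_ifs with hc <;> simp [hc]

lemma unitDescent_rimRow (μ : YoungDiagram) : UnitDescent (rimRow μ) := fun c =>
  (em (c ∈ Set.range (xseq μ))).symm.imp notMem_range_xseq_iff.1 mem_range_xseq_iff.1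

lemma mem_cells_iff_lt_rimRow {x : ℕ × ℕ} : x ∈ μ.cells ↔ (x.1 : ℤ) < rimRow μ (content x) := by
  obtain ⟨i, j⟩ := x
  rw [lt_rimRow_iff, YoungDiagram.mem_cells, YoungDiagram.mem_iff_lt_rowLen, xseq, content]
  dsimp only
  omega

lemma mem_sdiff_cells_iff {x : ℕ × ℕ} : x ∈ μ.cells \ lam.cells ↔
    rimRow lam (content x) ≤ x.1 ∧ (x.1 : ℤ) < rimRow μ (content x) := by
  rw [mem_sdiff, mem_cells_iff_lt_rimRow, mem_cells_iff_lt_rimRow, not_lt, and_comm]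

lemma le_iff_rimRow_le : lam ≤ μ ↔ ∀ c, rimRow lam c ≤ rimRow μ c := by
  constructor
  · intro h c
    obtain ⟨x, hxc, hxr⟩ := exists_box (rimRow_nonneg μ c) (id_add_rimRow_nonneg μ c)
    have hxμ : x ∉ μ.cells := by rw [mem_cells_iff_lt_rimRow, hxc, hxr]; exact lt_irrefl _
    have hxlam : x ∉ lam.cells := fun hx => hxμ (h hx)
    rwa [mem_cells_iff_lt_rimRow, hxc, hxr, not_lt] at hxlam
  · intro h x hx
    rw [← YoungDiagram.mem_cells, mem_cells_iff_lt_rimRow] at hx ⊢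
    exact hx.trans_le (h _)

end Rim

section DotCounts

variable {μ : YoungDiagram} {a b : ℤ}

open Classical in
lemma blackCount_eq_card (μ : YoungDiagram) (a b : ℤ) :
    blackCount μ a b = #{n ∈ Icc a b | n ∈ Set.range (xseq μ)} :=
  Nat.subtype_card _ fun n => by rw [mem_filter, mem_Icc, Set.mem_Icc]

open Classical in
lemma whiteCount_eq_card (μ : YoungDiagram) (a b : ℤ) :
    whiteCount μ a b = #{n ∈ Icc a b | n ∉ Set.range (xseq μ)} :=
  Nat.subtype_card _ fun n => by rw [mem_filter, mem_Icc, Set.mem_Icc]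

lemma blackCount_eq (hab : a - 1 ≤ b) :
    (blackCount μ a b : ℤ) = rimRow μ (a - 1) - rimRow μ b := by
  classical
  induction b, hab using Int.leInduction with
  | base => simp [blackCount_eq_card]
  | succ n hn ih =>
    have hstep := rimRow_sub_one μ (n + 1)
    rw [add_sub_cancel_right] at hstep
    have hIcc : Icc a (n + 1) = insert (n + 1) (Icc a n) := by
      ext x
      simp only [mem_Icc, mem_insert]
      omega
    rw [blackCount_eq_card] at ih ⊢
    rw [hIcc, filter_insert]
    split_ifs at hstep ⊢
    · rw [card_insert_of_notMem (by simp)]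
      push_cast
      omega
    · omega

lemma whiteCount_eq (hab : a - 1 ≤ b) :
    (whiteCount μ a b : ℤ) = b + 1 - a - (rimRow μ (a - 1) - rimRow μ b) := by
  classical
  have htotal := card_filter_add_card_filter_not (s := Icc a b) (· ∈ Set.range (xseq μ))
  rw [← blackCount_eq_card, ← whiteCount_eq_card, Int.card_Icc] at htotal
  rw [← blackCount_eq hab]
  omega

lemma arrowPair_iff : ArrowPair μ a b ↔ a < b ∧ a ∉ Set.range (xseq μ) ∧
    b ∈ Set.range (xseq μ) ∧ ArrowProfile (rimRow μ) a b := by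
  refine and_congr_right fun hab => and_congr_right fun ha => and_congr_right fun hb => ?_
  have hwhite := notMem_range_xseq_iff.1 ha
  have hblack := mem_range_xseq_iff.1 hb
  have hbc := blackCount_eq (μ := μ) (a := a) (b := b) (by omega)
  have hwc := whiteCount_eq (μ := μ) (a := a) (b := b) (by omega)
  have count_after (m : ℤ) (ham : a ≤ m) :
      blackCount μ (a + 1) m ≤ whiteCount μ (a + 1) m ↔
        2 * (rimRow μ a - rimRow μ m) ≤ m - a := by
    have hbc := blackCount_eq (μ := μ) (a := a + 1) (b := m) (by omega)
    have hwc := whiteCount_eq (μ := μ) (a := a + 1) (b := m) (by omega)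
    rw [add_sub_cancel_right] at hbc hwc
    omega
  refine and_congr (by omega) ⟨fun h c hac hcb => ?_, fun h m ham hmb => ?_⟩
  · rcases hac.eq_or_lt with rfl | hac
    · simp
    · exact (count_after c hac.le).1 (h c hac hcb)
  · exact (count_after m ham.le).2 (h m ham.le hmb)

end DotCounts

section Depth

variable {μ lam : YoungDiagram} {x y : ℕ × ℕ}

/-- The number of steps from the box `x` along its diagonal to the last box of `μ` on it; it is
negative for the boxes outside `μ`. -/
def rimDepth (μ : YoungDiagram) (x : ℕ × ℕ) : ℤ := rimRow μ (content x) - 1 - x.1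

lemma mem_cells_iff_rimDepth : x ∈ μ.cells ↔ 0 ≤ rimDepth μ x := by
  rw [mem_cells_iff_lt_rimRow, rimDepth]
  omega

lemma mem_sdiff_cells_iff_rimDepth :
    x ∈ μ.cells \ lam.cells ↔ 0 ≤ rimDepth μ x ∧ rimDepth lam x < 0 := by
  rw [mem_sdiff, mem_cells_iff_rimDepth, mem_cells_iff_rimDepth, not_le]

lemma exists_mem_sdiff_cells_iff {c k : ℤ} :
    (∃ x ∈ μ.cells \ lam.cells, content x = c ∧ rimDepth μ x = k) ↔
      0 ≤ k ∧ k < rimRow μ c - rimRow lam c := by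
  constructor
  · rintro ⟨x, hx, rfl, rfl⟩
    rw [mem_sdiff_cells_iff] at hx
    rw [rimDepth]
    omega
  · rintro ⟨hk, hkc⟩
    have hrow := rimRow_nonneg lam c
    have hcol := id_add_rimRow_nonneg lam c
    obtain ⟨x, rfl, hx⟩ := exists_box (c := c) (r := rimRow μ c - 1 - k) (by omega) (by omega)
    refine ⟨x, mem_sdiff_cells_iff.2 (by omega), rfl, ?_⟩
    rw [rimDepth]
    omega

lemma box_ext_rimDepth (hc : content x = content y) (hd : rimDepth μ x = rimDepth μ y) :
    x = y := by
  rw [rimDepth, rimDepth, hc] at hd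
  exact box_ext hc (by omega)

lemma rimDepth_add_diag (μ : YoungDiagram) (x : ℕ × ℕ) (k : ℕ) :
    rimDepth μ (x + (k, k)) = rimDepth μ x - k := by
  rw [rimDepth, rimDepth, content_add_diag, Prod.fst_add]
  omega

lemma eq_add_diag_of_rimDepth {k : ℕ} (hc : content x = content y)
    (hd : rimDepth μ x = rimDepth μ y + k) : y = x + (k, k) :=
  box_ext_rimDepth (μ := μ) (by rw [content_add_diag, hc]) (by rw [rimDepth_add_diag]; omega)

open Classical in
lemma rimDepth_down (μ : YoungDiagram) (x : ℕ × ℕ) : rimDepth μ (x.1 + 1, x.2) =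
    rimDepth μ x - 1 + if content x ∈ Set.range (xseq μ) then 1 else 0 := by
  rw [rimDepth, rimDepth, content_down, rimRow_sub_one]
  push_cast
  ring

open Classical in
lemma rimDepth_right (μ : YoungDiagram) (x : ℕ × ℕ) : rimDepth μ (x.1, x.2 + 1) =
    rimDepth μ x - if content x + 1 ∈ Set.range (xseq μ) then 1 else 0 := by
  have hstep := rimRow_sub_one μ (content x + 1)
  rw [add_sub_cancel_right] at hstep
  rw [rimDepth, rimDepth, content_right, hstep]
  ring

lemma BoxAdj.rimDepth_le_add_one (h : BoxAdj x y) (μ : YoungDiagram) :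
    rimDepth μ x ≤ rimDepth μ y + 1 := by
  have hx := (unitDescent_rimRow μ).eq_or_eq_succ (content x)
  have hy := (unitDescent_rimRow μ).eq_or_eq_succ (content y)
  rw [rimDepth, rimDepth]
  rcases boxAdj_iff.1 h with ⟨hc, hr⟩ | ⟨hc, hr⟩
  · rw [← hc] at hx
    omega
  · rw [← hc] at hy
    omega

end Depth

/-! ### Ribbons parallel to the rim -/

/-- The profile of the boxes at depth `d` below the rim of `μ`. -/
def innerRim (μ : YoungDiagram) (d c : ℤ) : ℤ := rimRow μ c - 1 - d

lemma unitDescent_innerRim (μ : YoungDiagram) (d : ℤ) : UnitDescent (innerRim μ d) := fun c => by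
  have := unitDescent_rimRow μ c
  unfold innerRim
  omega

/-- `S` is the piece of the rim of `μ` on the contents `[a, b)`, moved by `d` steps up the
diagonals, and `(a, b)` is a wb pair of `x_μ`. -/
structure IsRimRibbon (μ : YoungDiagram) (S : Finset (ℕ × ℕ)) (d a b : ℤ) : Prop
    extends IsRibbon S (innerRim μ d) a b where
  white : a ∉ Set.range (xseq μ)
  black : b ∈ Set.range (xseq μ)

namespace IsRimRibbon

variable {μ : YoungDiagram} {S T : Finset (ℕ × ℕ)} {d a b d' a' b' : ℤ}

lemma mem_iff (hS : IsRimRibbon μ S d a b) {x : ℕ × ℕ} :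
    x ∈ S ↔ a ≤ content x ∧ content x < b ∧ rimDepth μ x = d := by
  rw [hS.mem_iff_row, innerRim, rimDepth]
  omega

lemma inGammaZero_iff (hS : IsRimRibbon μ S d a b) : InGammaZero S ↔ ArrowPair μ a b := by
  rw [arrowPair_iff, and_iff_right hS.lt, and_iff_right hS.white, and_iff_right hS.black,
    hS.toIsRibbon.inGammaZero_iff (unitDescent_innerRim μ d)]
  exact arrowProfile_congr (fun c c' => by unfold innerRim; ring) a b

lemma nestedIn (hS : IsRimRibbon μ S (d + 1) a b) (hT : IsRimRibbon μ T d a' b') (ha : a' < a)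
    (hb : b < b') : NestedIn S T := by
  classical
  intro x hx
  have hdown := rimDepth_down μ x
  have hright := rimDepth_right μ x
  rw [hS.mem_iff] at hx
  have hleft_end : content x = a → content x ∉ Set.range (xseq μ) := fun h => h ▸ hS.white
  have hright_end : content x + 1 = b → content x + 1 ∈ Set.range (xseq μ) := fun h => h ▸ hS.black
  rw [hS.mem_iff, hT.mem_iff, hS.mem_iff, hT.mem_iff, content_down, content_right]
  constructor
  · split_ifs at hdown with hblack
    · have : content x ≠ a := fun h => hleft_end h hblack
      omega
    · omega
  · split_ifs at hright with hblack
    · omega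
    · have : content x + 1 ≠ b := fun h => hblack (hright_end h)
      omega

lemma hooksDisjoint_of_depth (hS : IsRimRibbon μ S d a b) (hT : IsRimRibbon μ T d' a' b')
    (h : d' + 2 ≤ d) : HooksDisjoint S T := by
  intro x hx y hy
  rw [hS.mem_iff] at hx
  rw [hT.mem_iff] at hy
  refine ⟨?_, fun hadj => ?_⟩
  · rintro rfl
    omega
  · have := hadj.rimDepth_le_add_one μ
    omega

lemma hooksDisjoint_or_nestedIn (hS : IsRimRibbon μ S d a b) (hT : IsRimRibbon μ T d' a' b')
    (hd : d' < d) (ha : a' < a) (hb : b < b') : HooksDisjoint S T ∨ NestedIn S T := by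
  rcases (show d' + 1 ≤ d from hd).eq_or_lt with rfl | hd
  · exact Or.inr (hS.nestedIn hT ha hb)
  · exact Or.inl (hS.hooksDisjoint_of_depth hT (by omega))

end IsRimRibbon

namespace IsRibbon

variable {S T : Finset (ℕ × ℕ)} {f g : ℤ → ℤ} {a b a' b' : ℤ}

lemma hooksDisjoint_of_lt (hS : IsRibbon S f a b) (hT : IsRibbon T g a' b') (h : b < a') :
    HooksDisjoint S T := by
  intro x hx y hy
  rw [hS.mem_iff_row] at hx
  rw [hT.mem_iff_row] at hy
  refine ⟨?_, fun hadj => ?_⟩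
  · rintro rfl
    omega
  · rw [boxAdj_iff] at hadj
    omega

lemma lt_and_lt_of_nestedIn (hS : IsRibbon S f a b) (hT : IsRibbon T g a' b')
    (h : NestedIn S T) : a' < a ∧ b < b' := by
  have hab := hS.lt
  constructor
  · obtain ⟨x, hx, hxc⟩ := hS.exists_content_eq a le_rfl hab
    have hdown := (h x hx).1
    rw [hS.mem_iff_row, hT.mem_iff_row, content_down] at hdown
    omega
  · obtain ⟨x, hx, hxc⟩ := hS.exists_content_eq (b - 1) (by omega) (by omega)
    have hright := (h x hx).2
    rw [hS.mem_iff_row, hT.mem_iff_row, content_right] at hright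
    omega

end IsRibbon

/-! ### Families of wb pairs -/

/-- A collection of wb pairs of `x_μ`, any two of which are disjoint or nested. -/
structure IsWBFamily (μ : YoungDiagram) (P : Finset (ℤ × ℤ)) : Prop where
  lt : ∀ p ∈ P, p.1 < p.2
  white : ∀ p ∈ P, p.1 ∉ Set.range (xseq μ)
  black : ∀ p ∈ P, p.2 ∈ Set.range (xseq μ)
  noncrossing : ∀ p ∈ P, ∀ q ∈ P, p ≠ q →
    (p.2 < q.1 ∨ q.2 < p.1 ∨ (q.1 < p.1 ∧ p.2 < q.2) ∨ (p.1 < q.1 ∧ q.2 < p.2))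

/-- `x_lam` is obtained from `x_μ` by recolouring all the wb pairs in `P`. -/
def FlipsTo (μ lam : YoungDiagram) (P : Finset (ℤ × ℤ)) : Prop :=
  ∀ n : ℤ, n ∈ Set.range (xseq lam) ↔
    ((n ∈ Set.range (xseq μ) ∧ ∀ p ∈ P, p.2 ≠ n) ∨ ∃ p ∈ P, p.1 = n)

/-- The number of pairs `(a, b)` in `P` with `a ≤ c < b`: by how much flipping `P` moves the rim up
the diagonal of content `c`. -/
def coverNum (P : Finset (ℤ × ℤ)) (c : ℤ) : ℕ := #{p ∈ P | p.1 ≤ c ∧ c < p.2}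

/-- The number of pairs of `P` strictly around `p`: the depth below the rim of the hook removed by
`p`. -/
def nestDepth (P : Finset (ℤ × ℤ)) (p : ℤ × ℤ) : ℕ := #{q ∈ P | q.1 < p.1 ∧ p.2 < q.2}

lemma card_filter_eq_ite {α β : Type*} [DecidableEq β] {s : Finset α} {g : α → β}
    (hg : Set.InjOn g s) (b : β) [Decidable (∃ a ∈ s, g a = b)] :
    #{a ∈ s | g a = b} = if ∃ a ∈ s, g a = b then 1 else 0 := by
  split_ifs with h
  · obtain ⟨a, ha, rfl⟩ := h
    refine card_eq_one.2 ⟨a, ?_⟩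
    ext a'
    rw [mem_filter, mem_singleton]
    exact ⟨fun h => hg h.1 ha h.2, by rintro rfl; exact ⟨ha, rfl⟩⟩
  · exact card_eq_zero.2 (filter_eq_empty_iff.2 fun a ha hab => h ⟨a, ha, hab⟩)

-- Both sides count the pairs `(a, b)` with `a ≤ c ≤ b`.
lemma coverNum_sub_one {P : Finset (ℤ × ℤ)} (hP : ∀ p ∈ P, p.1 < p.2) (c : ℤ) :
    coverNum P (c - 1) + #{p ∈ P | p.1 = c} = coverNum P c + #{p ∈ P | p.2 = c} := by
  simp only [coverNum, card_filter, ← sum_add_distrib]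
  refine sum_congr rfl fun p hp => ?_
  have := hP p hp
  split_ifs <;> omega

section NestDepth

variable {P : Finset (ℤ × ℤ)} {p q : ℤ × ℤ}

lemma nestDepth_lt_nestDepth (hq : q ∈ P) (hl : q.1 < p.1) (hr : p.2 < q.2) :
    nestDepth P q < nestDepth P p := by
  refine card_lt_card ((ssubset_iff_of_subset fun r hr => ?_).2 ⟨q, ?_, ?_⟩)
  · rw [mem_filter] at hr ⊢
    exact ⟨hr.1, by omega⟩
  · exact mem_filter.2 ⟨hq, hl, hr⟩
  · exact fun h => (mem_filter.1 h).2.1.false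

lemma nestDepth_lt_coverNum (hp : p ∈ P) {c : ℤ} (hl : p.1 ≤ c) (hr : c < p.2) :
    nestDepth P p < coverNum P c := by
  refine card_lt_card ((ssubset_iff_of_subset fun r hr => ?_).2 ⟨p, ?_, ?_⟩)
  · rw [mem_filter] at hr ⊢
    exact ⟨hr.1, by omega⟩
  · exact mem_filter.2 ⟨hp, hl, hr⟩
  · exact fun h => (mem_filter.1 h).2.1.false

end NestDepth

lemma eq_of_sub_one_sub_eq {f g : ℤ → ℤ} (h : ∀ c, f (c - 1) - f c = g (c - 1) - g c) {N : ℤ}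
    (hN : f N = g N) (c : ℤ) : f c = g c := by
  induction c using Int.inductionOn' (b := N) with
  | zero => exact hN
  | succ k _ ih =>
    have := h (k + 1)
    rw [add_sub_cancel_right] at this
    omega
  | pred k _ ih =>
    have := h k
    omega

namespace IsWBFamily

variable {μ lam : YoungDiagram} {P : Finset (ℤ × ℤ)}

lemma injOn_fst (hP : IsWBFamily μ P) : Set.InjOn Prod.fst (P : Set (ℤ × ℤ)) := by
  intro p hp q hq h
  by_contra hpq
  have := hP.noncrossing p hp q hq hpq
  have := hP.lt p hp
  have := hP.lt q hq
  omega

lemma injOn_snd (hP : IsWBFamily μ P) : Set.InjOn Prod.snd (P : Set (ℤ × ℤ)) := by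
  intro p hp q hq h
  by_contra hpq
  have := hP.noncrossing p hp q hq hpq
  have := hP.lt p hp
  have := hP.lt q hq
  omega

lemma flipsTo_iff_forall_sub_one (hP : IsWBFamily μ P) : FlipsTo μ lam P ↔
    ∀ c, rimRow lam (c - 1) - rimRow lam c =
      (rimRow μ (c - 1) - coverNum P (c - 1)) - (rimRow μ c - coverNum P c) := by
  classical
  refine forall_congr' fun c => ?_
  have hcover := coverNum_sub_one hP.lt c
  rw [card_filter_eq_ite hP.injOn_fst, card_filter_eq_ite hP.injOn_snd] at hcover
  have hwhite : (∃ p ∈ P, p.1 = c) → c ∉ Set.range (xseq μ) := by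
    rintro ⟨p, hp, rfl⟩
    exact hP.white p hp
  have hblack : (∃ p ∈ P, p.2 = c) → c ∈ Set.range (xseq μ) := by
    rintro ⟨p, hp, rfl⟩
    exact hP.black p hp
  have hnot : (∀ p ∈ P, p.2 ≠ c) ↔ ¬∃ p ∈ P, p.2 = c := by push Not; rfl
  rw [rimRow_sub_one, rimRow_sub_one, hnot]
  by_cases hlam : c ∈ Set.range (xseq lam) <;> by_cases hμ : c ∈ Set.range (xseq μ) <;>
    by_cases hfst : ∃ p ∈ P, p.1 = c <;> by_cases hsnd : ∃ p ∈ P, p.2 = c <;>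
    simp only [hlam, hμ, hfst, hsnd, if_true, if_false] at hcover hwhite hblack ⊢ <;> grind

lemma coverNum_eq_zero (hP : IsWBFamily μ P) {c : ℤ} (hc : (μ.rowLen 0 : ℤ) ≤ c) :
    coverNum P c = 0 := by
  refine card_eq_zero.2 (filter_eq_empty_iff.2 fun p hp h => ?_)
  obtain ⟨k, hk⟩ := hP.black p hp
  have := μ.rowLen_anti 0 k (Nat.zero_le k)
  unfold xseq at hk
  omega

lemma flipsTo_iff (hP : IsWBFamily μ P) :
    FlipsTo μ lam P ↔ ∀ c, rimRow lam c = rimRow μ c - coverNum P c := by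
  rw [hP.flipsTo_iff_forall_sub_one]
  refine ⟨fun h => eq_of_sub_one_sub_eq h (N := max (μ.rowLen 0) (lam.rowLen 0)) ?_,
    fun h c => by rw [h, h]⟩
  rw [rimRow_eq_zero (le_max_left _ _), rimRow_eq_zero (le_max_right _ _),
    hP.coverNum_eq_zero (le_max_left _ _)]
  rfl

lemma eq_of_nestDepth_eq (hP : IsWBFamily μ P) {c : ℤ} {p q : ℤ × ℤ} (hp : p ∈ P) (hq : q ∈ P)
    (hpc : p.1 ≤ c ∧ c < p.2) (hqc : q.1 ≤ c ∧ c < q.2) (h : nestDepth P p = nestDepth P q) :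
    p = q := by
  by_contra hpq
  rcases hP.noncrossing p hp q hq hpq with h' | h' | ⟨hl, hr⟩ | ⟨hl, hr⟩
  · omega
  · omega
  · exact (nestDepth_lt_nestDepth hq hl hr).ne' h
  · exact (nestDepth_lt_nestDepth hp hl hr).ne h

lemma exists_nestDepth_eq (hP : IsWBFamily μ P) {c : ℤ} {k : ℕ} (hk : k < coverNum P c) :
    ∃ p ∈ P, (p.1 ≤ c ∧ c < p.2) ∧ nestDepth P p = k := by
  have hsurj : Set.SurjOn (nestDepth P) ↑{p ∈ P | p.1 ≤ c ∧ c < p.2} ↑(range (coverNum P c)) := by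
    refine surjOn_of_injOn_of_card_le _ (fun p hp => ?_) (fun p hp q hq h => ?_)
      (card_range _).le
    · rw [mem_coe, mem_filter] at hp
      exact mem_coe.2 (mem_range.2 (nestDepth_lt_coverNum hp.1 hp.2.1 hp.2.2))
    · rw [mem_coe, mem_filter] at hp hq
      exact hP.eq_of_nestDepth_eq hp.1 hq.1 hp.2 hq.2 h
  obtain ⟨p, hp, hpk⟩ := hsurj (mem_coe.2 (mem_range.2 hk))
  rw [mem_coe, mem_filter] at hp
  exact ⟨p, hp.1, hp.2, hpk⟩

end IsWBFamily

/-! ### From wb pairs to coverings -/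

/-- The hook removed from `μ` by flipping `p` as a member of the family `P`. -/
noncomputable def pairHook (μ : YoungDiagram) (P : Finset (ℤ × ℤ)) (p : ℤ × ℤ) :
    Finset (ℕ × ℕ) :=
  ribbon (innerRim μ (nestDepth P p)) p.1 p.2

namespace IsWBFamily

variable {μ lam : YoungDiagram} {P : Finset (ℤ × ℤ)} {p q : ℤ × ℤ}

lemma isRimRibbon_pairHook (hP : IsWBFamily μ P) (hflip : FlipsTo μ lam P) (hp : p ∈ P) :
    IsRimRibbon μ (pairHook μ P p) (nestDepth P p) p.1 p.2 := by
  refine ⟨isRibbon_ribbon (hP.lt p hp) fun c hl hr => ?_, hP.white p hp, hP.black p hp⟩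
  have hdepth := nestDepth_lt_coverNum hp hl hr
  have hrim := hP.flipsTo_iff.1 hflip c
  have hrow := rimRow_nonneg lam c
  have hcol := id_add_rimRow_nonneg lam c
  unfold innerRim
  omega

lemma le_of_flipsTo (hP : IsWBFamily μ P) (hflip : FlipsTo μ lam P) : lam ≤ μ :=
  le_iff_rimRow_le.2 fun c => by have := hP.flipsTo_iff.1 hflip c; omega

lemma pairHook_subset (hP : IsWBFamily μ P) (hflip : FlipsTo μ lam P) (hp : p ∈ P) :
    pairHook μ P p ⊆ μ.cells \ lam.cells := by
  intro x hx
  rw [(hP.isRimRibbon_pairHook hflip hp).mem_iff] at hx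
  have hdepth := nestDepth_lt_coverNum hp hx.1 hx.2.1
  have hrim := hP.flipsTo_iff.1 hflip (content x)
  rw [mem_sdiff_cells_iff_rimDepth]
  unfold rimDepth at hx ⊢
  omega

lemma existsUnique_mem_pairHook (hP : IsWBFamily μ P) (hflip : FlipsTo μ lam P) {x : ℕ × ℕ}
    (hx : x ∈ μ.cells \ lam.cells) : ∃! p, p ∈ P ∧ x ∈ pairHook μ P p := by
  have hrim := hP.flipsTo_iff.1 hflip (content x)
  have hdepth := exists_mem_sdiff_cells_iff.1 ⟨x, hx, rfl, rfl⟩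
  obtain ⟨p, hp, hpx, hpd⟩ := hP.exists_nestDepth_eq (c := content x)
    (k := (rimDepth μ x).toNat) (by omega)
  refine ⟨p, ⟨hp, ?_⟩, fun q ⟨hq, hxq⟩ => ?_⟩
  · rw [(hP.isRimRibbon_pairHook hflip hp).mem_iff]
    omega
  · rw [(hP.isRimRibbon_pairHook hflip hq).mem_iff] at hxq
    exact hP.eq_of_nestDepth_eq hq hp ⟨hxq.1, hxq.2.1⟩ hpx (by omega)

lemma hooksDisjoint_or_nestedIn_pairHook (hP : IsWBFamily μ P) (hflip : FlipsTo μ lam P)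
    (hp : p ∈ P) (hq : q ∈ P) (hpq : p ≠ q) :
    HooksDisjoint (pairHook μ P p) (pairHook μ P q) ∨
      NestedIn (pairHook μ P p) (pairHook μ P q) ∨ NestedIn (pairHook μ P q) (pairHook μ P p) := by
  have hp' := hP.isRimRibbon_pairHook hflip hp
  have hq' := hP.isRimRibbon_pairHook hflip hq
  rcases hP.noncrossing p hp q hq hpq with h | h | ⟨hl, hr⟩ | ⟨hl, hr⟩
  · exact Or.inl (hp'.hooksDisjoint_of_lt hq'.toIsRibbon h)
  · exact Or.inl (hq'.hooksDisjoint_of_lt hp'.toIsRibbon h).symm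
  · have hd := Int.ofNat_lt.2 (nestDepth_lt_nestDepth hq hl hr)
    exact (hp'.hooksDisjoint_or_nestedIn hq' hd hl hr).imp_right Or.inl
  · have hd := Int.ofNat_lt.2 (nestDepth_lt_nestDepth hp hl hr)
    exact (hq'.hooksDisjoint_or_nestedIn hp' hd hl hr).imp HooksDisjoint.symm Or.inr

lemma isCovering_image_pairHook (hP : IsWBFamily μ P) (hflip : FlipsTo μ lam P) :
    IsCovering (μ.cells \ lam.cells) (P.image (pairHook μ P)) := by
  refine ⟨forall_mem_image.2 fun p hp => ?_,
    forall_mem_image.2 fun p hp => hP.pairHook_subset hflip hp, fun x hx => ?_,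
    forall_mem_image.2 fun p hp => forall_mem_image.2 fun q hq hne =>
      hP.hooksDisjoint_or_nestedIn_pairHook hflip hp hq fun h => hne (h ▸ rfl)⟩
  · exact (hP.isRimRibbon_pairHook hflip hp).isHook (unitDescent_innerRim _ _)
  · obtain ⟨p, ⟨hp, hxp⟩, huniq⟩ := hP.existsUnique_mem_pairHook hflip hx
    refine ⟨pairHook μ P p, ⟨mem_image_of_mem _ hp, hxp⟩, fun γ ⟨hγ, hxγ⟩ => ?_⟩
    obtain ⟨q, hq, rfl⟩ := mem_image.1 hγ
    rw [huniq q ⟨hq, hxγ⟩]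

end IsWBFamily

/-! ### From coverings to wb pairs -/

namespace IsCovering

variable {κ γ δ : Finset (ℕ × ℕ)} {C : Finset (Finset (ℕ × ℕ))} {x y : ℕ × ℕ}

lemma isHook (hC : IsCovering κ C) (hγ : γ ∈ C) : IsHook γ := hC.1 γ hγ

lemma mem_of_mem (hC : IsCovering κ C) (hγ : γ ∈ C) (hx : x ∈ γ) : x ∈ κ := hC.2.1 γ hγ hx

lemma exists_mem (hC : IsCovering κ C) (hx : x ∈ κ) : ∃ γ ∈ C, x ∈ γ := (hC.2.2.1 x hx).exists

lemma eq_of_mem (hC : IsCovering κ C) (hγ : γ ∈ C) (hδ : δ ∈ C) (hxγ : x ∈ γ) (hxδ : x ∈ δ) :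
    γ = δ :=
  (hC.2.2.1 x (hC.mem_of_mem hγ hxγ)).unique ⟨hγ, hxγ⟩ ⟨hδ, hxδ⟩

lemma nestedIn_or_nestedIn (hC : IsCovering κ C) (hγ : γ ∈ C) (hδ : δ ∈ C) (hne : γ ≠ δ)
    (hx : x ∈ γ) (hy : y ∈ δ) (hadj : BoxAdj x y) : NestedIn γ δ ∨ NestedIn δ γ :=
  (hC.2.2.2 γ hγ δ hδ hne).resolve_left fun h => (h x hx y hy).2 hadj

lemma add_diag_mem_of_nestedIn (hC : IsCovering κ C) (hγ : γ ∈ C) (hδ : δ ∈ C) (hne : γ ≠ δ)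
    (hn : NestedIn γ δ) (hx : x ∈ γ) : x + (1, 1) ∈ δ :=
  hn.add_diag_mem (hC.isHook hγ) (hC.isHook hδ)
    (disjoint_left.2 fun _ hzγ hzδ => hne (hC.eq_of_mem hγ hδ hzγ hzδ)) hx

lemma ne_of_add_diag_mem (hC : IsCovering κ C) (hγ : γ ∈ C) (hx : x ∈ γ) (hxδ : x + (1, 1) ∈ δ) :
    γ ≠ δ :=
  fun h => (hC.isHook hγ).add_diag_notMem hx one_pos (h ▸ hxδ)

lemma nestedIn_of_add_diag_mem (hC : IsCovering κ C) (hκ : IsSkew κ) (hγ : γ ∈ C) (hδ : δ ∈ C)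
    (hx : x ∈ γ) (hxδ : x + (1, 1) ∈ δ) : NestedIn γ δ := by
  have hne := hC.ne_of_add_diag_mem hγ hx hxδ
  have not_nestedIn : ¬NestedIn δ γ := fun hn => by
    have hx2 := hC.add_diag_mem_of_nestedIn hδ hγ hne.symm hn hxδ
    rw [add_assoc] at hx2
    exact (hC.isHook hγ).add_diag_notMem hx two_pos hx2
  have hdown : (x.1 + 1, x.2) ∈ κ := hκ.mem_of_le_of_le (hC.mem_of_mem hγ hx)
    (hC.mem_of_mem hδ hxδ) (by simp [Prod.le_def]) (by simp [Prod.le_def])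
  have hadj : BoxAdj (x.1 + 1, x.2) (x + (1, 1)) := boxAdj_right _
  obtain ⟨ε, hε, hdownε⟩ := hC.exists_mem hdown
  rcases eq_or_ne γ ε with rfl | hγε
  · exact (hC.nestedIn_or_nestedIn hγ hδ hne hdownε hxδ hadj).resolve_right not_nestedIn
  rcases hC.nestedIn_or_nestedIn hγ hε hγε hx hdownε (boxAdj_down x) with hn | hn
  · have hxε := hC.add_diag_mem_of_nestedIn hγ hε hγε hn hx
    rwa [hC.eq_of_mem hδ hε hxδ hxε]
  · have hδε : δ = ε := by
      rcases (hn _ hdownε).2 with hxε | hxγ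
      · exact hC.eq_of_mem hδ hε hxδ hxε
      · exact absurd (hC.eq_of_mem hγ hδ hxγ hxδ) hne
    exact absurd (hδε ▸ hn) not_nestedIn

lemma exists_add_diag_mem (hC : IsCovering κ C) (hκ : IsSkew κ) (hx : x ∈ κ) {k : ℕ}
    (hxk : x + (k + 1, k + 1) ∈ κ) : ∃ δ ∈ C, x + (1, 1) ∈ δ :=
  hC.exists_mem (hκ.mem_of_le_of_le hx hxk (by simp) (by simp [Prod.le_def]))

lemma add_diag_mem_of_mem (hC : IsCovering κ C) (hκ : IsSkew κ) (k : ℕ) :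
    ∀ {γ}, γ ∈ C → ∀ {x y}, x ∈ γ → y ∈ γ → x + (k, k) ∈ κ → y + (k, k) ∈ κ := by
  induction k with
  | zero => exact fun hγ _ _ _ hy _ => hC.mem_of_mem hγ hy
  | succ k ih =>
    intro γ hγ x y hx hy hxk
    obtain ⟨δ, hδ, hxδ⟩ := hC.exists_add_diag_mem hκ (hC.mem_of_mem hγ hx) hxk
    have hyδ := hC.add_diag_mem_of_nestedIn hγ hδ (hC.ne_of_add_diag_mem hγ hx hxδ)
      (hC.nestedIn_of_add_diag_mem hκ hγ hδ hx hxδ) hy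
    rw [← add_diag_succ] at hxk ⊢
    exact ih hδ hxδ hyδ hxk

section Skew

variable {μ lam : YoungDiagram}

lemma rimDepth_eq_of_mem (hC : IsCovering (μ.cells \ lam.cells) C)
    (hκ : IsSkew (μ.cells \ lam.cells)) (hγ : γ ∈ C) (hx : x ∈ γ) (hy : y ∈ γ) :
    rimDepth μ x = rimDepth μ y := by
  have le_of_mem {x y} (hx : x ∈ γ) (hy : y ∈ γ) : rimDepth μ x ≤ rimDepth μ y := by
    have hxκ := mem_sdiff_cells_iff_rimDepth.1 (hC.mem_of_mem hγ hx)
    have h := hC.add_diag_mem_of_mem hκ (rimDepth μ x).toNat hγ hx hy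
    simp only [mem_sdiff_cells_iff_rimDepth, rimDepth_add_diag] at h
    omega
  exact le_antisymm (le_of_mem hx hy) (le_of_mem hy hx)

lemma rimDepth_add_one_of_boxAdj (hC : IsCovering (μ.cells \ lam.cells) C)
    (hκ : IsSkew (μ.cells \ lam.cells)) (hγ : γ ∈ C) (hx : x ∈ γ)
    (hy : y ∈ μ.cells \ lam.cells) (hadj : BoxAdj x y) (hyγ : ∀ z ∈ γ, content z ≠ content y) :
    rimDepth μ y + 1 = rimDepth μ x := by
  obtain ⟨ε, hε, hyε⟩ := hC.exists_mem hy
  have hne : γ ≠ ε := by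
    rintro rfl
    exact hyγ y hyε rfl
  rcases hC.nestedIn_or_nestedIn hγ hε hne hx hyε hadj with hn | hn
  · have hxε := hC.add_diag_mem_of_nestedIn hγ hε hne hn hx
    have h := hC.rimDepth_eq_of_mem hκ hε hxε hyε
    rw [rimDepth_add_diag] at h
    omega
  · have hyγ' := hC.add_diag_mem_of_nestedIn hε hγ hne.symm hn hyε
    exact absurd (content_add_diag y 1) (hyγ _ hyγ')

lemma content_notMem_range_of_min (hC : IsCovering (μ.cells \ lam.cells) C)
    (hκ : IsSkew (μ.cells \ lam.cells)) (hγ : γ ∈ C) (hx : x ∈ γ)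
    (hmin : ∀ z ∈ γ, content x ≤ content z) : content x ∉ Set.range (xseq μ) := by
  classical
  intro hblack
  have hxκ := mem_sdiff_cells_iff_rimDepth.1 (hC.mem_of_mem hγ hx)
  have hμ := rimDepth_down μ x
  have hlam := rimDepth_down lam x
  rw [if_pos hblack] at hμ
  have hdown : (x.1 + 1, x.2) ∈ μ.cells \ lam.cells := by
    rw [mem_sdiff_cells_iff_rimDepth]
    split_ifs at hlam <;> omega
  have := hC.rimDepth_add_one_of_boxAdj hκ hγ hx hdown (boxAdj_down x) fun z hz => by
    have := hmin z hz
    rw [content_down]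
    omega
  omega

lemma content_add_one_mem_range_of_max (hC : IsCovering (μ.cells \ lam.cells) C)
    (hκ : IsSkew (μ.cells \ lam.cells)) (hγ : γ ∈ C) (hx : x ∈ γ)
    (hmax : ∀ z ∈ γ, content z ≤ content x) : content x + 1 ∈ Set.range (xseq μ) := by
  classical
  by_contra hwhite
  have hxκ := mem_sdiff_cells_iff_rimDepth.1 (hC.mem_of_mem hγ hx)
  have hμ := rimDepth_right μ x
  have hlam := rimDepth_right lam x
  rw [if_neg hwhite] at hμ
  have hright : (x.1, x.2 + 1) ∈ μ.cells \ lam.cells := by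
    rw [mem_sdiff_cells_iff_rimDepth]
    split_ifs at hlam <;> omega
  have := hC.rimDepth_add_one_of_boxAdj hκ hγ hx hright (boxAdj_right x) fun z hz => by
    have := hmax z hz
    rw [content_right]
    omega
  omega

lemma exists_isRimRibbon (hC : IsCovering (μ.cells \ lam.cells) C)
    (hκ : IsSkew (μ.cells \ lam.cells)) (hγ : γ ∈ C) : ∃ d a b, IsRimRibbon μ γ d a b := by
  have hook := hC.isHook hγ
  obtain ⟨m, hm, hmin⟩ := exists_min_image γ content hook.2.1
  obtain ⟨M, hM, hmax⟩ := exists_max_image γ content hook.2.1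
  have exists_content (c : ℤ) (hmc : content m ≤ c) (hcM : c < content M + 1) :
      ∃ x ∈ γ, content x = c := hook.exists_content_eq hm hM hmc (by omega)
  refine ⟨rimDepth μ m, content m, content M + 1,
    ⟨by have := hmin M hM; omega, fun x => ?_, exists_content⟩,
    hC.content_notMem_range_of_min hκ hγ hm hmin,
    hC.content_add_one_mem_range_of_max hκ hγ hM hmax⟩
  have hrow : (x.1 : ℤ) = innerRim μ (rimDepth μ m) (content x) ↔ rimDepth μ x = rimDepth μ m := by
    have : rimDepth μ x = rimRow μ (content x) - 1 - x.1 := rfl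
    rw [innerRim]
    omega
  rw [hrow]
  constructor
  · intro hx
    exact ⟨hmin x hx, Int.lt_add_one_of_le (hmax x hx), hC.rimDepth_eq_of_mem hκ hγ hx hm⟩
  · rintro ⟨hmx, hxM, hdepth⟩
    obtain ⟨z, hz, hzx⟩ := exists_content (content x) hmx hxM
    have hzd := hC.rimDepth_eq_of_mem hκ hγ hz hm
    rwa [box_ext_rimDepth hzx.symm (hdepth.trans hzd.symm)]

variable {d a b : Finset (ℕ × ℕ) → ℤ}

lemma lt_and_lt_of_add_diag_mem (hC : IsCovering κ C) (hκ : IsSkew κ)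
    (hrib : ∀ γ ∈ C, IsRimRibbon μ γ (d γ) (a γ) (b γ)) (k : ℕ) :
    ∀ {γ δ x}, γ ∈ C → δ ∈ C → x ∈ γ → x + (k + 1, k + 1) ∈ δ → a δ < a γ ∧ b γ < b δ := by
  have nested {γ δ x} (hγ : γ ∈ C) (hδ : δ ∈ C) (hx : x ∈ γ) (hxδ : x + (1, 1) ∈ δ) :
      a δ < a γ ∧ b γ < b δ :=
    (hrib γ hγ).lt_and_lt_of_nestedIn (hrib δ hδ).toIsRibbon
      (hC.nestedIn_of_add_diag_mem hκ hγ hδ hx hxδ)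
  induction k with
  | zero => exact nested
  | succ k ih =>
    intro γ δ x hγ hδ hx hxδ
    obtain ⟨ε, hε, hxε⟩ :=
      hC.exists_add_diag_mem hκ (hC.mem_of_mem hγ hx) (hC.mem_of_mem hδ hxδ)
    have hγε := nested hγ hε hx hxε
    have hεδ := ih hε hδ hxε (by rwa [add_diag_succ])
    omega

lemma noncrossing (hC : IsCovering κ C) (hκ : IsSkew κ)
    (hrib : ∀ γ ∈ C, IsRimRibbon μ γ (d γ) (a γ) (b γ)) (hγ : γ ∈ C) (hδ : δ ∈ C) (hne : γ ≠ δ) :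
    b γ < a δ ∨ b δ < a γ ∨ (a δ < a γ ∧ b γ < b δ) ∨ (a γ < a δ ∧ b δ < b γ) := by
  have hγδ : b γ ≠ a δ := fun h => (hrib δ hδ).white (h ▸ (hrib γ hγ).black)
  have hδγ : b δ ≠ a γ := fun h => (hrib γ hγ).white (h ▸ (hrib δ hδ).black)
  by_cases hapart : b γ < a δ ∨ b δ < a γ
  · rw [← or_assoc]
    exact Or.inl hapart
  refine Or.inr (Or.inr ?_)
  have hγlt := (hrib γ hγ).lt
  have hδlt := (hrib δ hδ).lt
  obtain ⟨x, hx, hxc⟩ := (hrib γ hγ).exists_content_eq (max (a γ) (a δ)) (by omega) (by omega)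
  obtain ⟨y, hy, hyc⟩ := (hrib δ hδ).exists_content_eq (max (a γ) (a δ)) (by omega) (by omega)
  have hxy : content x = content y := hxc.trans hyc.symm
  rcases lt_trichotomy (rimDepth μ x) (rimDepth μ y) with hlt | heq | hlt
  · obtain ⟨k, hk⟩ := Int.le.dest hlt
    have hxk : x = y + (k + 1, k + 1) := eq_add_diag_of_rimDepth (μ := μ) hxy.symm (by omega)
    exact Or.inr (hC.lt_and_lt_of_add_diag_mem hκ hrib k hδ hγ hy (hxk ▸ hx))
  · exact absurd (hC.eq_of_mem hγ hδ hx (box_ext_rimDepth hxy heq ▸ hy)) hne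
  · obtain ⟨k, hk⟩ := Int.le.dest hlt
    have hyk : y = x + (k + 1, k + 1) := eq_add_diag_of_rimDepth (μ := μ) hxy (by omega)
    exact Or.inl (hC.lt_and_lt_of_add_diag_mem hκ hrib k hγ hδ hx (hyk ▸ hy))

lemma isWBFamily_image (hC : IsCovering κ C) (hκ : IsSkew κ)
    (hrib : ∀ γ ∈ C, IsRimRibbon μ γ (d γ) (a γ) (b γ)) :
    IsWBFamily μ (C.image fun γ => (a γ, b γ)) where
  lt := forall_mem_image.2 fun γ hγ => (hrib γ hγ).lt
  white := forall_mem_image.2 fun γ hγ => (hrib γ hγ).white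
  black := forall_mem_image.2 fun γ hγ => (hrib γ hγ).black
  noncrossing := forall_mem_image.2 fun _ hγ => forall_mem_image.2 fun _ hδ hne =>
    hC.noncrossing hκ hrib hγ hδ fun h => hne (h ▸ rfl)

lemma injOn_ends (hC : IsCovering κ C) (hκ : IsSkew κ)
    (hrib : ∀ γ ∈ C, IsRimRibbon μ γ (d γ) (a γ) (b γ)) :
    Set.InjOn (fun γ => (a γ, b γ)) (C : Set (Finset (ℕ × ℕ))) := by
  intro γ hγ δ hδ h
  by_contra hne
  have := hC.noncrossing hκ hrib hγ hδ hne
  have := (hrib γ hγ).lt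
  rw [Prod.mk.injEq] at h
  omega

-- The hooks of `C` crossing the diagonal of content `c` correspond, through their depth, to the
-- boxes of `μ/λ` on that diagonal.
lemma coverNum_image (hC : IsCovering (μ.cells \ lam.cells) C) (hle : lam ≤ μ)
    (hrib : ∀ γ ∈ C, IsRimRibbon μ γ (d γ) (a γ) (b γ)) (c : ℤ) :
    (coverNum (C.image fun γ => (a γ, b γ)) c : ℤ) = rimRow μ c - rimRow lam c := by
  have hκ : IsSkew (μ.cells \ lam.cells) := ⟨lam, μ, hle, rfl⟩
  have hcard : #{γ ∈ C | a γ ≤ c ∧ c < b γ} = #(Ico 0 (rimRow μ c - rimRow lam c)) := by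
    refine card_bij (fun γ _ => d γ) (fun γ hγ => ?_) (fun γ hγ δ hδ h => ?_) fun k hk => ?_
    · obtain ⟨hγ, hac, hcb⟩ := mem_filter.1 hγ
      obtain ⟨x, hx, hxc⟩ := (hrib γ hγ).exists_content_eq c hac hcb
      exact mem_Ico.2 (exists_mem_sdiff_cells_iff.1
        ⟨x, hC.mem_of_mem hγ hx, hxc, ((hrib γ hγ).mem_iff.1 hx).2.2⟩)
    · obtain ⟨hγC, hac, hcb⟩ := mem_filter.1 hγ
      obtain ⟨hδC, hac', hcb'⟩ := mem_filter.1 hδ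
      obtain ⟨x, hx, rfl⟩ := (hrib γ hγC).exists_content_eq c hac hcb
      have hxd := ((hrib γ hγC).mem_iff.1 hx).2.2
      exact hC.eq_of_mem hγC hδC hx ((hrib δ hδC).mem_iff.2 ⟨hac', hcb', hxd.trans h⟩)
    · obtain ⟨x, hx, rfl, rfl⟩ := exists_mem_sdiff_cells_iff.2 (mem_Ico.1 hk)
      obtain ⟨γ, hγ, hxγ⟩ := hC.exists_mem hx
      have hxm := (hrib γ hγ).mem_iff.1 hxγ
      exact ⟨γ, mem_filter.2 ⟨hγ, hxm.1, hxm.2.1⟩, hxm.2.2.symm⟩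
  have hlerim := le_iff_rimRow_le.1 hle c
  rw [coverNum, filter_image, card_image_of_injOn
    ((hC.injOn_ends hκ hrib).mono (coe_subset.2 (filter_subset _ _))), hcard, Int.card_Ico]
  omega

end Skew

end IsCovering

/-- `λ ∈ Π(μ)` if and only if `λ ⊆ μ` and the skew diagram `μ/λ` lies in `Γ`. -/
theorem inPi_iff_gamma (μ lam : YoungDiagram) :
    InPi μ lam ↔ lam ≤ μ ∧ InGamma (μ.cells \ lam.cells) := by
  constructor
  · rintro ⟨P, harrow, hnoncrossing, hflip⟩
    have hP : IsWBFamily μ P :=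
      ⟨fun p hp => (harrow p hp).1, fun p hp => (harrow p hp).2.1,
        fun p hp => (harrow p hp).2.2.1, hnoncrossing⟩
    have hle : lam ≤ μ := hP.le_of_flipsTo hflip
    refine ⟨hle, ⟨lam, μ, hle, rfl⟩, P.image (pairHook μ P), hP.isCovering_image_pairHook hflip,
      forall_mem_image.2 fun p hp => ?_⟩
    exact (hP.isRimRibbon_pairHook hflip hp).inGammaZero_iff.2 (harrow p hp)
  · rintro ⟨hle, hκ, C, hC, hΓ⟩
    choose! d a b hrib using fun γ (hγ : γ ∈ C) => hC.exists_isRimRibbon hκ hγ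
    have hP := hC.isWBFamily_image hκ hrib
    refine ⟨C.image fun γ => (a γ, b γ), forall_mem_image.2 fun γ hγ => ?_, hP.noncrossing,
      hP.flipsTo_iff.2 fun c => ?_⟩
    · exact (hrib γ hγ).inGammaZero_iff.1 (hΓ γ hγ)
    · rw [hC.coverNum_image hle hrib, sub_sub_cancel]
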